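/- For every tree T = (A, B, E), bceovs(T, A) = bcevs(T), and moreover this common value is achieved by a sequence consisting only of edge editions, i.e., an optimal sequence that uses no vertex splitting. -/

import Mathlib

/- Common framework: bipartite graphs on vertex set `ℕ` with side labels,
   edge editions, vertex splittings, and the bicluster-editing numbers. -/

namespace BCE

/-- A graph on a finite subset of `ℕ` equipped with a labelling of its
vertices into two sides `A` and `B`. -/
structure BGraph where
  A : Set ℕ
  B : Set ℕ
  finA : A.Finite
  finB : B.Finite
  Adj : ℕ → ℕ → Prop
  symm : ∀ u v, Adj u v → Adj v u

/-- The vertex set of a graph. -/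
def verts (G : BGraph) : Set ℕ := G.A ∪ G.B

/-- The open neighbourhood of a vertex. -/
def nbhd (G : BGraph) (v : ℕ) : Set ℕ := {u | G.Adj v u}

/-- `G = (A, B, E)` is bipartite: the sides are disjoint and every edge joins
a vertex of `A` with a vertex of `B`. -/
def Bipartite (G : BGraph) : Prop :=
  Disjoint G.A G.B ∧
    ∀ u v, G.Adj u v → (u ∈ G.A ∧ v ∈ G.B) ∨ (u ∈ G.B ∧ v ∈ G.A)

/-- A (bipartite) graph is a disjoint union of bicliques iff whenever
`a-b-c-d` is a walk, `a` and `d` are adjacent (equivalently, every connected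
component is a complete bipartite graph). -/
def IsBicliqueUnion (G : BGraph) : Prop :=
  ∀ a b c d, G.Adj a b → G.Adj b c → G.Adj c d → G.Adj a d

/-- The editing operations: deletion of an edge, addition of an edge, and
splitting of a vertex `v` into `v` and a fresh vertex `v'` whose
neighbourhoods `N1`, `N2` cover the neighbourhood of `v`. -/
inductive Op where
  | del : ℕ → ℕ → Op
  | add : ℕ → ℕ → Op
  | split : ℕ → ℕ → Set ℕ → Set ℕ → Op

/-- `op` is a vertex splitting. -/
def IsSplitOp : Op → Prop
  | Op.split _ _ _ _ => True
  | _ => False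

/-- `OpStep sA sB op G G'` : performing the single operation `op` on `G`
yields `G'`; vertex splittings are allowed on side `A` (resp. `B`) only if
`sA` (resp. `sB`) is `true`.  A copy created by a splitting is put on the
same side as the split vertex. -/
inductive OpStep (sA sB : Bool) : Op → BGraph → BGraph → Prop where
  | del {G G' : BGraph} {u v : ℕ}
      (h : G.Adj u v) (hA : G'.A = G.A) (hB : G'.B = G.B)
      (hadj : ∀ x y, G'.Adj x y ↔
        (G.Adj x y ∧ ¬((x = u ∧ y = v) ∨ (x = v ∧ y = u)))) :
      OpStep sA sB (Op.del u v) G G'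
  | add {G G' : BGraph} {u v : ℕ}
      (hu : u ∈ G.A) (hv : v ∈ G.B) (h : ¬ G.Adj u v)
      (hA : G'.A = G.A) (hB : G'.B = G.B)
      (hadj : ∀ x y, G'.Adj x y ↔
        (G.Adj x y ∨ (x = u ∧ y = v) ∨ (x = v ∧ y = u))) :
      OpStep sA sB (Op.add u v) G G'
  | split {G G' : BGraph} {v v' : ℕ} {N1 N2 : Set ℕ}
      (hside : (v ∈ G.A ∧ sA = true) ∨ (v ∈ G.B ∧ sB = true))
      (hfresh : v' ∉ verts G)
      (hcover : N1 ∪ N2 = nbhd G v)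
      (hA : v ∈ G.A → G'.A = insert v' G.A ∧ G'.B = G.B)
      (hB : v ∈ G.B → G'.A = G.A ∧ G'.B = insert v' G.B)
      (hadj : ∀ x y, G'.Adj x y ↔
        ((G.Adj x y ∧ x ≠ v ∧ y ≠ v) ∨ (x = v ∧ y ∈ N1) ∨ (y = v ∧ x ∈ N1) ∨
          (x = v' ∧ y ∈ N2) ∨ (y = v' ∧ x ∈ N2))) :
      OpStep sA sB (Op.split v v' N1 N2) G G'

/-- `ApplySeq sA sB L G G'` : applying the sequence of operations `L`
to `G` yields `G'`. -/
def ApplySeq (sA sB : Bool) : List Op → BGraph → BGraph → Prop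
  | [], G, G' => G' = G
  | op :: L, G, G'' => ∃ G', OpStep sA sB op G G' ∧ ApplySeq sA sB L G' G''

/-- The sequence `L` transforms `G` into a disjoint union of bicliques. -/
def Solves (sA sB : Bool) (L : List Op) (G : BGraph) : Prop :=
  ∃ G', ApplySeq sA sB L G G' ∧ IsBicliqueUnion G'

/-- `bcevs G` : the minimum length of a sequence of edge editions and vertex
splittings transforming `G` into a disjoint union of bicliques. -/
noncomputable def bcevs (G : BGraph) : ℕ :=
  sInf {n | ∃ L, L.length = n ∧ Solves true true L G}

/-- `bceovs G` (that is, `bceovs(G, A)`) : the minimum length of such a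
sequence in which vertex splittings are applied only to vertices of the side
`A` (and their copies, which are also on side `A`). -/
noncomputable def bceovs (G : BGraph) : ℕ :=
  sInf {n | ∃ L, L.length = n ∧ Solves true false L G}

/-- The subgraph of `G` induced by `S`. -/
def induce (G : BGraph) (S : Set ℕ) : BGraph where
  A := G.A ∩ S
  B := G.B ∩ S
  finA := G.finA.subset Set.inter_subset_left
  finB := G.finB.subset Set.inter_subset_left
  Adj := fun u v => G.Adj u v ∧ u ∈ S ∧ v ∈ S
  symm := fun u v h => ⟨G.symm u v h.1, h.2.2, h.2.1⟩

/-- `G` is a tree (as an abstract graph on its vertex set). -/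
def IsTreeB (G : BGraph) : Prop :=
  (SimpleGraph.induce (verts G) (SimpleGraph.fromRel G.Adj)).IsTree

/-- `G` is connected. -/
def ConnectedB (G : BGraph) : Prop :=
  (SimpleGraph.induce (verts G) (SimpleGraph.fromRel G.Adj)).Connected

/-- The set `S` induces a biclique in `G`: every vertex of `S` on side `A` is
adjacent to every vertex of `S` on side `B`. -/
def IsBicliqueOn (G : BGraph) (S : Set ℕ) : Prop :=
  ∀ u ∈ S ∩ G.A, ∀ v ∈ S ∩ G.B, G.Adj u v

/-- The set `S` induces a star in `G`: some centre `c ∈ S` is adjacent to all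
other vertices of `S`, and every edge inside `S` uses the centre. -/
def IsStarOn (G : BGraph) (S : Set ℕ) : Prop :=
  ∃ c ∈ S, (∀ v ∈ S, v ≠ c → G.Adj c v) ∧
    (∀ u ∈ S, ∀ v ∈ S, G.Adj u v → u = c ∨ v = c)

/-- An `A`-partitioning cover of `G`: a collection of subsets of `A ∪ B`
covering all vertices whose traces on `A` form a partition of `A` (every
vertex of `A` lies in a unique member of the collection). -/
def IsAPartCover (G : BGraph) (C : Set (Set ℕ)) : Prop :=
  (∀ X ∈ C, X ⊆ verts G) ∧
  (∀ v ∈ verts G, ∃ X ∈ C, v ∈ X) ∧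
  (∀ a ∈ G.A, ∃! X, X ∈ C ∧ a ∈ X)

/-- The cost of an `A`-partitioning cover: each `a ∈ A` lying in the unique
set `X ∈ C` costs `|(B ∩ X) \ N(a)| + |N(a) \ X|`; each `b ∈ B` lying in `j`
members of `C` costs `j - 1`. -/
noncomputable def coverCost (G : BGraph) (C : Set (Set ℕ)) : ℕ :=
  (∑ᶠ a ∈ G.A, ∑ᶠ X ∈ {X ∈ C | a ∈ X},
      (((G.B ∩ X) \ nbhd G a).ncard + ((nbhd G a) \ X).ncard)) +
  ∑ᶠ b ∈ G.B, ({X ∈ C | b ∈ X}.ncard - 1)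

/-- The twin class of a vertex: all vertices of `G` with the same open
neighbourhood. -/
def twinClass (G : BGraph) (v : ℕ) : Set ℕ :=
  {u ∈ verts G | nbhd G u = nbhd G v}

/-- The twin classes of `G`. -/
def twinClasses (G : BGraph) : Set (Set ℕ) :=
  {T | ∃ v ∈ verts G, T = twinClass G v}

/-- A cover is twin-adapted if every member contains each twin class either
entirely or not at all. -/
def TwinAdapted (G : BGraph) (C : Set (Set ℕ)) : Prop :=
  ∀ T ∈ twinClasses G, ∀ X ∈ C, T ∩ X = ∅ ∨ T ⊆ X

/-- `G` is a cycle with consecutive vertices `p 0, p 1, …, p (m-1)`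
(indices modulo `m`), the vertices of even index forming side `A`. -/
def IsCycleWith (G : BGraph) (p : ℕ → ℕ) (m : ℕ) : Prop :=
  (∀ i j, i < m → j < m → p i = p j → i = j) ∧
  G.A = p '' {i | i < m ∧ i % 2 = 0} ∧
  G.B = p '' {i | i < m ∧ i % 2 = 1} ∧
  (∀ x y, G.Adj x y ↔ ∃ i < m,
    (x = p i ∧ y = p ((i + 1) % m)) ∨ (y = p i ∧ x = p ((i + 1) % m)))

/-- `G` is a path with `l` edges and consecutive vertices `p 0, …, p l`,
the vertices of even index forming side `A`. -/
def IsPathWith (G : BGraph) (p : ℕ → ℕ) (l : ℕ) : Prop :=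
  (∀ i j, i ≤ l → j ≤ l → p i = p j → i = j) ∧
  G.A = p '' {i | i ≤ l ∧ i % 2 = 0} ∧
  G.B = p '' {i | i ≤ l ∧ i % 2 = 1} ∧
  (∀ x y, G.Adj x y ↔ ∃ i < l,
    (x = p i ∧ y = p (i + 1)) ∨ (y = p i ∧ x = p (i + 1)))

end BCE

namespace BCE

/-- `H` projects onto `G` through `π`, preserving sides, and outside the set `Z` of pairs the
edges of `G` are exactly the projections of the edges of `H`. -/
structure Track (G H : BGraph) (π : ℕ → ℕ) (Z : Finset (ℕ × ℕ)) : Prop where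
  bip : Bipartite H
  mapA : ∀ x ∈ H.A, π x ∈ G.A
  mapB : ∀ x ∈ H.B, π x ∈ G.B
  surj : ∀ v ∈ verts G, ∃ x ∈ verts H, π x = v
  agree : ∀ a ∈ G.A, ∀ b ∈ G.B, (a, b) ∉ Z →
    (G.Adj a b ↔ ∃ x ∈ H.A, ∃ y ∈ H.B, H.Adj x y ∧ π x = a ∧ π y = b)

theorem Track.refl {G : BGraph} (hG : Bipartite G) : Track G G id ∅ where
  bip := hG
  mapA := fun _ h => h
  mapB := fun _ h => h
  surj := fun v hv => ⟨v, hv, rfl⟩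
  agree := fun a ha b hb _ => by simp [ha, hb]

theorem verts_finite (G : BGraph) : (verts G).Finite := G.finA.union G.finB

theorem Bipartite.not_mem_right {G : BGraph} (hG : Bipartite G) {x : ℕ} (hx : x ∈ G.A) :
    x ∉ G.B := Set.disjoint_left.mp hG.1 hx

/-- Changing the adjacency between `u ∈ A` and `v ∈ B` only costs one exceptional pair. -/
theorem Track.edit {G H H' : BGraph} {π : ℕ → ℕ} {Z : Finset (ℕ × ℕ)} (h : Track G H π Z)
    {u v : ℕ} (hA : H'.A = H.A) (hB : H'.B = H.B) (hbip : Bipartite H')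
    (hadj : ∀ x ∈ H.A, ∀ y ∈ H.B, ¬(x = u ∧ y = v) → (H'.Adj x y ↔ H.Adj x y)) :
    Track G H' π (insert (π u, π v) Z) where
  bip := hbip
  mapA := hA ▸ h.mapA
  mapB := hB ▸ h.mapB
  surj := by simpa only [verts, hA, hB] using h.surj
  agree := by
    intro a ha b hb hZ
    rw [Finset.mem_insert, not_or] at hZ
    rw [h.agree a ha b hb hZ.2, hA, hB]
    constructor
    · rintro ⟨x, hx, y, hy, hxy, rfl, rfl⟩
      refine ⟨x, hx, y, hy, (hadj x hx y hy ?_).2 hxy, rfl, rfl⟩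
      rintro ⟨rfl, rfl⟩; exact hZ.1 rfl
    · rintro ⟨x, hx, y, hy, hxy, rfl, rfl⟩
      refine ⟨x, hx, y, hy, (hadj x hx y hy ?_).1 hxy, rfl, rfl⟩
      rintro ⟨rfl, rfl⟩; exact hZ.1 rfl

theorem Bipartite.of_split {H H' : BGraph} (hbip : Bipartite H) {v v' : ℕ} {N1 N2 : Set ℕ}
    (hv : v ∈ verts H) (hfresh : v' ∉ verts H) (hcover : N1 ∪ N2 = nbhd H v)
    (hA : v ∈ H.A → H'.A = insert v' H.A ∧ H'.B = H.B)
    (hB : v ∈ H.B → H'.A = H.A ∧ H'.B = insert v' H.B)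
    (hadj : ∀ x y, H'.Adj x y ↔
      ((H.Adj x y ∧ x ≠ v ∧ y ≠ v) ∨ (x = v ∧ y ∈ N1) ∨ (y = v ∧ x ∈ N1) ∨
        (x = v' ∧ y ∈ N2) ∨ (y = v' ∧ x ∈ N2))) : Bipartite H' := by
  have h1 : ∀ y ∈ N1, H.Adj v y := fun y hy => hcover.le (Or.inl hy)
  have h2 : ∀ y ∈ N2, H.Adj v y := fun y hy => hcover.le (Or.inr hy)
  have hd := fun x => @Bipartite.not_mem_right H hbip x
  have he := hbip.2
  simp only [verts, Set.mem_union, not_or] at hfresh hv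
  rcases hv with hv | hv
  · obtain ⟨e1, e2⟩ := hA hv
    refine ⟨?_, ?_⟩
    · rw [e1, e2, Set.disjoint_left]
      rintro x (rfl | hx)
      · exact hfresh.2
      · exact hd x hx
    · intro x y hxy
      rw [hadj] at hxy
      rw [e1, e2]
      simp only [Set.mem_insert_iff]
      grind
  · obtain ⟨e1, e2⟩ := hB hv
    refine ⟨?_, ?_⟩
    · rw [e1, e2, Set.disjoint_left]
      rintro x hx (rfl | hx')
      · exact hfresh.1 hx
      · exact hd x hx hx'
    · intro x y hxy
      rw [hadj] at hxy
      rw [e1, e2]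
      simp only [Set.mem_insert_iff]
      grind

theorem Track.split {G H H' : BGraph} {π : ℕ → ℕ} {Z : Finset (ℕ × ℕ)} (h : Track G H π Z)
    {v v' : ℕ} {N1 N2 : Set ℕ}
    (hv : v ∈ verts H) (hfresh : v' ∉ verts H) (hcover : N1 ∪ N2 = nbhd H v)
    (hA : v ∈ H.A → H'.A = insert v' H.A ∧ H'.B = H.B)
    (hB : v ∈ H.B → H'.A = H.A ∧ H'.B = insert v' H.B)
    (hadj : ∀ x y, H'.Adj x y ↔
      ((H.Adj x y ∧ x ≠ v ∧ y ≠ v) ∨ (x = v ∧ y ∈ N1) ∨ (y = v ∧ x ∈ N1) ∨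
        (x = v' ∧ y ∈ N2) ∨ (y = v' ∧ x ∈ N2))) :
    Track G H' (Function.update π v' (π v)) Z := by
  have hbip' := h.bip.of_split hv hfresh hcover hA hB hadj
  have hc : ∀ y, H.Adj v y ↔ y ∈ N1 ∨ y ∈ N2 := fun y => (Set.ext_iff.1 hcover y).symm
  have hd := fun x => @Bipartite.not_mem_right H h.bip x
  have he := h.bip.2
  have hs := H.symm
  have hmA := h.mapA
  have hmB := h.mapB
  have hsurj := h.surj
  have hag := h.agree
  simp only [verts, Set.mem_union, not_or] at hfresh hv hsurj
  have hπ : ∀ x, x ≠ v' → Function.update π v' (π v) x = π x :=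
    fun x hx => Function.update_of_ne hx _ _
  have hπ' : Function.update π v' (π v) v' = π v := Function.update_self _ _ _
  generalize Function.update π v' (π v) = π' at hπ hπ'
  rcases hv with hv | hv
  · obtain ⟨e1, e2⟩ := hA hv
    refine ⟨hbip', ?_, ?_, ?_, ?_⟩ <;>
      simp only [verts, e1, e2, Set.mem_insert_iff, Set.mem_union]
    · grind
    · grind
    · grind
    · intro a ha b hb hZ
      rw [hag a ha b hb hZ]
      constructor
      · rintro ⟨x, hx, y, hy, hxy, rfl, rfl⟩
        by_cases hxv : x = v
        · subst hxv
          rcases (hc y).1 hxy with hy1 | hy2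
          · exact ⟨x, Or.inr hx, y, hy, by grind, by grind, by grind⟩
          · exact ⟨v', Or.inl rfl, y, hy, by grind, by grind, by grind⟩
        · exact ⟨x, Or.inr hx, y, hy, by grind, by grind, by grind⟩
      · rintro ⟨x, hx, y, hy, hxy, rfl, rfl⟩
        rw [hadj] at hxy
        by_cases hxv : x = v'
        · exact ⟨v, hv, y, hy, by grind, by grind, by grind⟩
        · exact ⟨x, by grind, y, hy, by grind, by grind, by grind⟩
  · obtain ⟨e1, e2⟩ := hB hv
    refine ⟨hbip', ?_, ?_, ?_, ?_⟩ <;>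
      simp only [verts, e1, e2, Set.mem_insert_iff, Set.mem_union]
    · grind
    · grind
    · grind
    · intro a ha b hb hZ
      rw [hag a ha b hb hZ]
      constructor
      · rintro ⟨x, hx, y, hy, hxy, rfl, rfl⟩
        by_cases hyv : y = v
        · subst hyv
          rcases (hc x).1 (hs _ _ hxy) with hy1 | hy2
          · exact ⟨x, hx, y, Or.inr hy, by grind, by grind, by grind⟩
          · exact ⟨x, hx, v', Or.inl rfl, by grind, by grind, by grind⟩
        · exact ⟨x, hx, y, Or.inr hy, by grind, by grind, by grind⟩
      · rintro ⟨x, hx, y, hy, hxy, rfl, rfl⟩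
        rw [hadj] at hxy
        by_cases hyv : y = v'
        · exact ⟨x, hx, v, hv, by grind, by grind, by grind⟩
        · exact ⟨x, hx, y, by grind, by grind, by grind, by grind⟩

theorem Track.step {G H H' : BGraph} {π : ℕ → ℕ} {Z : Finset (ℕ × ℕ)} (h : Track G H π Z)
    {sA sB : Bool} {op : Op} (hop : OpStep sA sB op H H') :
    ∃ π' Z', Track G H' π' Z' ∧
      Z'.card + (verts H').ncard ≤ Z.card + (verts H).ncard + 1 := by
  have hd := fun x => @Bipartite.not_mem_right H h.bip x
  have he := h.bip.2
  cases hop with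
  | @del _ _ u v huv hA hB hadj =>
    have hbip : Bipartite H' := by
      refine ⟨by rw [hA, hB]; exact h.bip.1, fun x y hxy => ?_⟩
      rw [hA, hB]; exact he x y ((hadj x y).1 hxy).1
    have hV : verts H' = verts H := by simp only [verts, hA, hB]
    rw [hV]
    rcases he u v huv with ⟨hu, hv⟩ | ⟨hu, hv⟩
    · refine ⟨π, _, h.edit (u := u) (v := v) hA hB hbip ?_, ?_⟩
      · intro x hx y hy hne
        rw [hadj]; grind
      · have := Finset.card_insert_le (π u, π v) Z
        omega
    · refine ⟨π, _, h.edit (u := v) (v := u) hA hB hbip ?_, ?_⟩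
      · intro x hx y hy hne
        rw [hadj]; grind
      · have := Finset.card_insert_le (π v, π u) Z
        omega
  | @add _ _ u v hu hv huv hA hB hadj =>
    have hbip : Bipartite H' := by
      refine ⟨by rw [hA, hB]; exact h.bip.1, fun x y hxy => ?_⟩
      rw [hA, hB]
      rcases (hadj x y).1 hxy with hxy | ⟨rfl, rfl⟩ | ⟨rfl, rfl⟩
      · exact he x y hxy
      · exact Or.inl ⟨hu, hv⟩
      · exact Or.inr ⟨hv, hu⟩
    have hV : verts H' = verts H := by simp only [verts, hA, hB]
    rw [hV]
    refine ⟨π, _, h.edit (u := u) (v := v) hA hB hbip ?_, ?_⟩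
    · intro x hx y hy hne
      rw [hadj]; grind
    · have := Finset.card_insert_le (π u, π v) Z
      omega
  | @split _ _ v v' N1 N2 hside hfresh hcover hA hB hadj =>
    have hv : v ∈ verts H := hside.imp And.left And.left
    refine ⟨_, _, h.split hv hfresh hcover hA hB hadj, ?_⟩
    have hV : verts H' = insert v' (verts H) := by
      rcases hv with hv | hv
      · simp only [verts, hA hv, Set.insert_union]
      · simp only [verts, hB hv, Set.union_insert]
    rw [hV]
    have := Set.ncard_insert_le v' (verts H)
    omega

theorem Track.applySeq {G : BGraph} {sA sB : Bool} {L : List Op} {H H' : BGraph}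
    {π : ℕ → ℕ} {Z : Finset (ℕ × ℕ)} (h : Track G H π Z) (hL : ApplySeq sA sB L H H') :
    ∃ π' Z', Track G H' π' Z' ∧
      Z'.card + (verts H').ncard ≤ Z.card + (verts H).ncard + L.length := by
  induction L generalizing H π Z with
  | nil => cases hL; exact ⟨π, Z, h, by simp⟩
  | cons op L ih =>
    obtain ⟨H₁, hop, hL⟩ := hL
    obtain ⟨π₁, Z₁, h₁, hc₁⟩ := h.step hop
    obtain ⟨π₂, Z₂, h₂, hc₂⟩ := ih h₁ hL
    exact ⟨π₂, Z₂, h₂, by rw [List.length_cons]; omega⟩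

/-- No cycle of length four. -/
def C4Free (G : BGraph) : Prop :=
  ∀ a a' b b', G.Adj a b → G.Adj a' b → G.Adj a b' → G.Adj a' b' → a = a' ∨ b = b'

/-- `D` dominates `S` in `G`. -/
def Dominates (G : BGraph) (D S : Finset ℕ) : Prop :=
  ∀ s ∈ S, s ∈ D ∨ ∃ d ∈ D, G.Adj s d

open Classical in
/-- The pairs in `X × X`, not inside `S × S`, which join `A` to `B` and are not edges. -/
noncomputable def nonEdges (G : BGraph) (X S : Finset ℕ) : Finset (ℕ × ℕ) :=
  (X ×ˢ X).filter fun p => p.1 ∈ G.A ∧ p.2 ∈ G.B ∧ ¬ G.Adj p.1 p.2 ∧ ¬(p.1 ∈ S ∧ p.2 ∈ S)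

/-- A pair `a₀, b₀` together with one endpoint of every non-edge dominates `X \ S`. -/
theorem exists_dominates_pair {G : BGraph} {X S : Finset ℕ}
    (hX : ∀ x ∈ X, x ∈ verts G) {a₀ b₀ : ℕ} (ha : a₀ ∈ X) (hb : b₀ ∈ X)
    (haA : a₀ ∈ G.A) (hbB : b₀ ∈ G.B) :
    ∃ D : Finset ℕ, D ⊆ X ∧ Dominates G D (X \ S) ∧
      D.card ≤ ((nonEdges G X S).erase (a₀, b₀)).card + 2 := by
  classical
  refine ⟨insert a₀ (insert b₀ (((nonEdges G X S).erase (a₀, b₀)).image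
    fun p => if p.1 = a₀ then p.2 else p.1)), ?_, ?_, ?_⟩
  · intro x
    simp only [nonEdges, Finset.mem_insert, Finset.mem_image, Finset.mem_erase,
      Finset.mem_filter, Finset.mem_product]
    grind
  · intro x hx
    rw [Finset.mem_sdiff] at hx
    have hs := G.symm
    by_cases hxa : x = a₀
    · left; simp [hxa]
    by_cases hxb : x = b₀
    · left; simp [hxb]
    rcases hX x hx.1 with hA | hB
    · by_cases hadj : G.Adj x b₀
      · exact Or.inr ⟨b₀, by simp, hadj⟩
      · left
        simp only [Finset.mem_insert, Finset.mem_image]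
        refine Or.inr (Or.inr ⟨(x, b₀), ?_, by simp [hxa]⟩)
        simp [nonEdges, hx, hb, hA, hbB, hadj, hxa]
    · by_cases hadj : G.Adj x a₀
      · exact Or.inr ⟨a₀, by simp, hadj⟩
      · left
        simp only [Finset.mem_insert, Finset.mem_image]
        refine Or.inr (Or.inr ⟨(a₀, x), ?_, by simp⟩)
        have : ¬ G.Adj a₀ x := fun h => hadj (hs _ _ h)
        simp [nonEdges, hx, ha, hB, haA, this, hxb]
  · refine (Finset.card_insert_le _ _).trans ?_
    have := Finset.card_insert_le b₀ (((nonEdges G X S).erase (a₀, b₀)).image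
      fun p => if p.1 = a₀ then p.2 else p.1)
    have := Finset.card_image_le (s := (nonEdges G X S).erase (a₀, b₀))
      (f := fun p => if p.1 = a₀ then p.2 else p.1)
    omega

/-- The new part of a vertex set meeting both sides is dominated at a price bounded by its
new non-edges and its old vertices. -/
theorem exists_dominates_new {G : BGraph} (hd : Disjoint G.A G.B) (hC4 : C4Free G)
    {X S : Finset ℕ} (hX : ∀ x ∈ X, x ∈ verts G)
    (hne : (∃ x, X = {x}) ∨ ((∃ a ∈ X, a ∈ G.A) ∧ ∃ b ∈ X, b ∈ G.B)) :
    ∃ D : Finset ℕ, D ⊆ X ∧ Dominates G D (X \ S) ∧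
      D.card ≤ (nonEdges G X S).card + max 1 (X ∩ S).card := by
  classical
  have hs := G.symm
  rcases hne with ⟨x, rfl⟩ | ⟨⟨a₁, ha₁, haA₁⟩, b₁, hb₁, hbB₁⟩
  · refine ⟨{x}, subset_rfl, fun s hs => Or.inl (Finset.mem_sdiff.1 hs).1, ?_⟩
    rw [Finset.card_singleton]; omega
  by_cases hold : ∃ a ∈ X, ∃ b ∈ X, a ∈ G.A ∧ b ∈ G.B ∧ a ∈ S ∧ b ∈ S
  · obtain ⟨a, ha, b, hb, haA, hbB, haS, hbS⟩ := hold
    obtain ⟨D, hDX, hD, hc⟩ := exists_dominates_pair (S := S) hX ha hb haA hbB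
    refine ⟨D, hDX, hD, ?_⟩
    have h1 := Finset.card_erase_le (s := nonEdges G X S) (a := (a, b))
    have hab : a ≠ b := by rintro rfl; exact Set.disjoint_left.1 hd haA hbB
    have h2 : 2 ≤ (X ∩ S).card := by
      rw [← Finset.card_pair hab]
      apply Finset.card_le_card
      intro x; simp only [Finset.mem_insert, Finset.mem_singleton, Finset.mem_inter]
      rintro (rfl | rfl) <;> exact ⟨by assumption, by assumption⟩
    omega
  by_cases hnon : ∃ a ∈ X, ∃ b ∈ X, a ∈ G.A ∧ b ∈ G.B ∧ ¬ G.Adj a b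
  · obtain ⟨a, ha, b, hb, haA, hbB, hab⟩ := hnon
    obtain ⟨D, hDX, hD, hc⟩ := exists_dominates_pair (S := S) hX ha hb haA hbB
    refine ⟨D, hDX, hD, ?_⟩
    have hm : (a, b) ∈ nonEdges G X S := by
      simp only [nonEdges, Finset.mem_filter, Finset.mem_product]
      exact ⟨⟨ha, hb⟩, haA, hbB, hab, fun h => hold ⟨a, ha, b, hb, haA, hbB, h⟩⟩
    have := Finset.card_erase_add_one hm
    omega
  push Not at hnon
  by_cases hone : ∀ a ∈ X, a ∈ G.A → a = a₁
  · refine ⟨{a₁}, by simpa using ha₁, fun x hx => ?_, by rw [Finset.card_singleton]; omega⟩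
    have hx := (Finset.mem_sdiff.1 hx).1
    rcases hX x hx with hA | hB
    · left; simp [hone x hx hA]
    · exact Or.inr ⟨a₁, by simp, hs _ _ (hnon a₁ ha₁ x hx haA₁ hB)⟩
  · push Not at hone
    obtain ⟨a, ha, haA, hne⟩ := hone
    refine ⟨{b₁}, by simpa using hb₁, fun x hx => ?_, by rw [Finset.card_singleton]; omega⟩
    have hx := (Finset.mem_sdiff.1 hx).1
    rcases hX x hx with hA | hB
    · exact Or.inr ⟨b₁, by simp, hnon x hx b₁ hb₁ hA hbB₁⟩
    · left
      rcases hC4 a a₁ x b₁ (hnon a ha x hx haA hB) (hnon a₁ ha₁ x hx haA₁ hB)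
        (hnon a ha b₁ hb₁ haA hbB₁) (hnon a₁ ha₁ b₁ hb₁ haA₁ hbB₁) with h | h
      · exact absurd h hne
      · simp [h]

/-- `W` is a union of connected components of `H`. -/
def IsClosed (H : BGraph) (W : Finset ℕ) : Prop :=
  (∀ y ∈ W, y ∈ verts H) ∧ ∀ y ∈ W, ∀ z, H.Adj y z → z ∈ W

theorem exists_component {H : BGraph} (hb : Bipartite H) (hH : IsBicliqueUnion H) {x : ℕ}
    (hx : x ∈ verts H) :
    ∃ C : Finset ℕ, IsClosed H C ∧ x ∈ C ∧
      (∀ y ∈ C, ∀ z ∈ C, y ∈ H.A → z ∈ H.B → H.Adj y z) ∧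
      (C = {x} ∨ ((∃ a ∈ C, a ∈ H.A) ∧ ∃ b ∈ C, b ∈ H.B)) ∧
      (∀ W, IsClosed H W → x ∉ W → Disjoint W C) := by
  classical
  have hd := fun x => @Bipartite.not_mem_right H hb x
  have he := hb.2
  have hs := H.symm
  have hH' := hH
  unfold IsBicliqueUnion at hH'
  have hadjV : ∀ y z, H.Adj y z → z ∈ verts H := fun y z hyz =>
    (he y z hyz).elim (fun h => Or.inr h.2) (fun h => Or.inl h.2)
  have hmem : ∀ z, z ∈ (verts_finite H).toFinset.filter
      (fun z => z = x ∨ H.Adj x z ∨ ∃ y, H.Adj x y ∧ H.Adj y z) ↔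
      (z = x ∨ H.Adj x z ∨ ∃ y, H.Adj x y ∧ H.Adj y z) := by
    intro z
    rw [Finset.mem_filter, Set.Finite.mem_toFinset, and_iff_right_iff_imp]
    rintro (rfl | h | ⟨y, -, h⟩)
    · exact hx
    · exact hadjV _ _ h
    · exact hadjV _ _ h
  refine ⟨(verts_finite H).toFinset.filter
      (fun z => z = x ∨ H.Adj x z ∨ ∃ y, H.Adj x y ∧ H.Adj y z), ⟨?_, ?_⟩, ?_, ?_, ?_, ?_⟩
  · intro y hy
    exact (verts_finite H).mem_toFinset.1 (Finset.mem_filter.1 hy).1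
  · intro y hy z hyz
    rw [hmem] at hy ⊢
    rcases hy with rfl | h | ⟨w, hw, h⟩
    · exact Or.inr (Or.inl hyz)
    · exact Or.inr (Or.inr ⟨y, h, hyz⟩)
    · exact Or.inr (Or.inl (hH _ _ _ _ hw h hyz))
  · rw [hmem]; exact Or.inl rfl
  · intro y hy z hz hyA hzB
    rw [hmem] at hy hz
    grind
  · by_cases hiso : ∃ y, H.Adj x y
    · right
      obtain ⟨y, hy⟩ := hiso
      simp only [hmem]
      rcases he x y hy with ⟨h1, h2⟩ | ⟨h1, h2⟩
      · exact ⟨⟨x, Or.inl rfl, h1⟩, y, Or.inr (Or.inl hy), h2⟩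
      · exact ⟨⟨y, Or.inr (Or.inl hy), h2⟩, x, Or.inl rfl, h1⟩
    · left
      ext z
      rw [hmem, Finset.mem_singleton]
      grind
  · intro W hW hxW
    rw [Finset.disjoint_left]
    intro z hz hzC
    rw [hmem] at hzC
    rcases hzC with rfl | h | ⟨w, hw, h⟩
    · exact hxW hz
    · exact hxW (hW.2 z hz x (hs _ _ h))
    · exact hxW (hW.2 w (hW.2 z hz w (hs _ _ h)) x (hs _ _ hw))

open Classical in
/-- The pairs of `Z` inside `S × S`. -/
noncomputable def inside (Z : Finset (ℕ × ℕ)) (S : Finset ℕ) : Finset (ℕ × ℕ) :=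
  Z.filter fun p => p.1 ∈ S ∧ p.2 ∈ S

open Classical in
/-- Adding one component to a union `W` of components, together with the vertices needed to
dominate its projection. -/
theorem Track.extend {G H : BGraph} {π : ℕ → ℕ} {Z : Finset (ℕ × ℕ)} (h : Track G H π Z)
    (hG : Bipartite G) (hC4 : C4Free G) (hH : IsBicliqueUnion H)
    {W D : Finset ℕ} (hW : IsClosed H W) (hDG : ∀ d ∈ D, d ∈ verts G)
    (hD : Dominates G D (W.image π)) {x : ℕ} (hx : x ∈ verts H) (hxW : x ∉ W) :
    ∃ W' D' X : Finset ℕ, IsClosed H W' ∧ W ⊆ W' ∧ x ∈ W' ∧ π x ∈ X ∧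
      (∀ y, H.Adj x y → π y ∈ X) ∧ W'.image π = W.image π ∪ X ∧
      (∀ d ∈ D', d ∈ verts G) ∧ Dominates G D' (W'.image π) ∧
      nonEdges G X (W.image π) ⊆ inside Z (W'.image π) \ inside Z (W.image π) ∧
      D'.card + (W'.image π).card + W.card ≤ D.card + (W.image π).card + W'.card +
        (nonEdges G X (W.image π)).card + (1 - (X ∩ W.image π).card) := by
  obtain ⟨C, hC, hxC, hcomp, hshape, hdisj⟩ := exists_component h.bip hH hx
  have hXG : ∀ v ∈ C.image π, v ∈ verts G := by
    intro v hv
    obtain ⟨y, hy, rfl⟩ := Finset.mem_image.1 hv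
    exact (hC.1 y hy).imp (h.mapA y) (h.mapB y)
  have hXne : (∃ v, C.image π = {v}) ∨
      ((∃ a ∈ C.image π, a ∈ G.A) ∧ ∃ b ∈ C.image π, b ∈ G.B) := by
    rcases hshape with rfl | ⟨⟨a, ha, haA⟩, b, hb, hbB⟩
    · exact Or.inl ⟨π x, by simp⟩
    · exact Or.inr ⟨⟨π a, Finset.mem_image_of_mem π ha, h.mapA a haA⟩,
        π b, Finset.mem_image_of_mem π hb, h.mapB b hbB⟩
  obtain ⟨E, hEX, hE, hEc⟩ := exists_dominates_new hG.1 hC4 (S := W.image π) hXG hXne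
  refine ⟨W ∪ C, D ∪ E, C.image π, ⟨?_, ?_⟩, Finset.subset_union_left,
    Finset.mem_union_right _ hxC, Finset.mem_image_of_mem π hxC,
    fun y hy => Finset.mem_image_of_mem π (hC.2 x hxC y hy), Finset.image_union _ _,
    ?_, ?_, ?_, ?_⟩
  · intro y hy
    exact (Finset.mem_union.1 hy).elim (hW.1 y) (hC.1 y)
  · intro y hy z hyz
    exact Finset.mem_union.2 ((Finset.mem_union.1 hy).imp (fun h => hW.2 y h z hyz)
      (fun h => hC.2 y h z hyz))
  · intro d hd
    exact (Finset.mem_union.1 hd).elim (hDG d) (fun h => hXG d (hEX h))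
  · intro s hs
    rw [Finset.image_union, Finset.mem_union] at hs
    by_cases hsW : s ∈ W.image π
    · rcases hD s hsW with h | ⟨d, hd, h⟩
      · exact Or.inl (Finset.mem_union_left _ h)
      · exact Or.inr ⟨d, Finset.mem_union_left _ hd, h⟩
    · rcases hE s (Finset.mem_sdiff.2 ⟨hs.resolve_left hsW, hsW⟩) with h | ⟨d, hd, h⟩
      · exact Or.inl (Finset.mem_union_right _ h)
      · exact Or.inr ⟨d, Finset.mem_union_right _ hd, h⟩
  · rintro ⟨a, b⟩ hab
    simp only [nonEdges, Finset.mem_filter, Finset.mem_product] at hab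
    obtain ⟨⟨haX, hbX⟩, haA, hbB, hadj, hnew⟩ := hab
    have hZ : (a, b) ∈ Z := by
      by_contra hZ
      refine hadj ((h.agree a haA b hbB hZ).2 ?_)
      obtain ⟨y, hy, rfl⟩ := Finset.mem_image.1 haX
      obtain ⟨z, hz, rfl⟩ := Finset.mem_image.1 hbX
      have hyA : y ∈ H.A := (hC.1 y hy).resolve_right
        fun hyB => hG.not_mem_right haA (h.mapB y hyB)
      have hzB : z ∈ H.B := (hC.1 z hz).resolve_left
        fun hzA => hG.not_mem_right (h.mapA z hzA) hbB
      exact ⟨y, hyA, z, hzB, hcomp y hy z hz hyA hzB, rfl, rfl⟩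
    simp only [inside, Finset.mem_sdiff, Finset.mem_filter, Finset.image_union,
      Finset.mem_union]
    exact ⟨⟨hZ, Or.inr haX, Or.inr hbX⟩, fun h => hnew h.2⟩
  · have h1 := Finset.card_union_le D E
    have h2 := Finset.card_union_of_disjoint (hdisj W hW hxW)
    have h3 := Finset.card_union_add_card_inter (W.image π) (C.image π)
    have h4 := Finset.card_image_le (s := C) (f := π)
    rw [Finset.image_union, h2]
    rw [Finset.inter_comm] at h3
    omega

/-- Every proper nonempty set of vertices is left by an edge. -/
def Linked (G : BGraph) : Prop :=
  ∀ S : Set ℕ, (∃ u ∈ S, u ∈ verts G) → (∃ v ∈ verts G, v ∉ S) →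
    ∃ u ∈ S, ∃ v ∉ S, G.Adj u v

theorem inside_mono (Z : Finset (ℕ × ℕ)) {S T : Finset ℕ} (h : S ⊆ T) :
    inside Z S ⊆ inside Z T := by
  classical
  intro p hp
  simp only [inside, Finset.mem_filter] at hp ⊢
  exact ⟨hp.1, h hp.2.1, h hp.2.2⟩

open Classical in
/-- A union of components of `H` whose projection is dominated at a cost accounted for by the
surplus vertices and the exceptional pairs can be enlarged. -/
theorem Track.grow {G H : BGraph} {π : ℕ → ℕ} {Z : Finset (ℕ × ℕ)} (h : Track G H π Z)
    (hG : Bipartite G) (hC4 : C4Free G) (hlink : Linked G) (hH : IsBicliqueUnion H)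
    {W D : Finset ℕ} (hW : IsClosed H W) (hDG : ∀ d ∈ D, d ∈ verts G)
    (hD : Dominates G D (W.image π)) (hne : W.Nonempty)
    (hc : D.card + (W.image π).card ≤ 1 + W.card + (inside Z (W.image π)).card)
    (hv : ∃ v ∈ verts G, v ∉ W.image π) :
    ∃ W' D' : Finset ℕ, IsClosed H W' ∧ W ⊂ W' ∧ (∀ d ∈ D', d ∈ verts G) ∧
      Dominates G D' (W'.image π) ∧
      D'.card + (W'.image π).card ≤ 1 + W'.card + (inside Z (W'.image π)).card := by
  have hs := G.symm
  obtain ⟨w, hw⟩ := hne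
  obtain ⟨u, hu, v, hv, huv⟩ := hlink (W.image π)
    ⟨π w, by simpa using ⟨w, hw, rfl⟩, (hW.1 w hw).imp (h.mapA w) (h.mapB w)⟩
    (by simpa using hv)
  rw [Finset.mem_coe] at hu hv
  -- an exceptional edge pays for the component; a projected edge makes it overlap `W`
  have key : ∃ x ∈ verts H, π x = v ∧ ((∃ y, H.Adj x y ∧ π y = u) ∨
      ∃ p ∈ Z, p.1 ∈ G.A ∧ p.2 ∈ G.B ∧ G.Adj p.1 p.2 ∧
        ((p.1 = u ∧ p.2 = v) ∨ (p.1 = v ∧ p.2 = u))) := by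
    rcases hG.2 u v huv with ⟨huA, hvB⟩ | ⟨huB, hvA⟩
    · by_cases hZ : (u, v) ∈ Z
      · obtain ⟨x, hx, hxv⟩ := h.surj v (Or.inr hvB)
        exact ⟨x, hx, hxv, Or.inr ⟨_, hZ, huA, hvB, huv, Or.inl ⟨rfl, rfl⟩⟩⟩
      · obtain ⟨y, hy, x, hx, hyx, hyu, hxv⟩ := (h.agree u huA v hvB hZ).1 huv
        exact ⟨x, Or.inr hx, hxv, Or.inl ⟨y, H.symm _ _ hyx, hyu⟩⟩
    · by_cases hZ : (v, u) ∈ Z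
      · obtain ⟨x, hx, hxv⟩ := h.surj v (Or.inl hvA)
        exact ⟨x, hx, hxv, Or.inr ⟨_, hZ, hvA, huB, hs _ _ huv, Or.inr ⟨rfl, rfl⟩⟩⟩
      · obtain ⟨x, hx, y, hy, hxy, hxv, hyu⟩ := (h.agree v hvA u huB hZ).1 (hs _ _ huv)
        exact ⟨x, Or.inl hx, hxv, Or.inl ⟨y, hxy, hyu⟩⟩
  obtain ⟨x, hx, rfl, hcase⟩ := key
  have hxW : x ∉ W := fun hxW => hv (Finset.mem_image_of_mem π hxW)
  obtain ⟨W', D', X, hW', hWW', hxW', hxX, hNX, himg, hDG', hD', hN, hcard⟩ :=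
    h.extend hG hC4 hH hW hDG hD hx hxW
  refine ⟨W', D', hW', (Finset.ssubset_iff_of_subset hWW').2 ⟨x, hxW', hxW⟩, hDG', hD', ?_⟩
  have hmono : inside Z (W.image π) ⊆ inside Z (W'.image π) :=
    inside_mono Z (Finset.image_subset_image hWW')
  have hsd := Finset.card_sdiff_add_card_eq_card hmono
  have hNc := Finset.card_le_card hN
  rcases hcase with ⟨y, hxy, rfl⟩ | ⟨p, hpZ, -, -, hpadj, hp⟩
  · have : 0 < (X ∩ W.image π).card :=
      Finset.card_pos.2 ⟨π y, Finset.mem_inter.2 ⟨hNX y hxy, hu⟩⟩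
    omega
  · have hpN : p ∉ nonEdges G X (W.image π) := by
      intro hp'
      simp only [nonEdges, Finset.mem_filter] at hp'
      exact hp'.2.2.2.1 hpadj
    have hpI : p ∈ inside Z (W'.image π) \ inside Z (W.image π) := by
      simp only [inside, Finset.mem_sdiff, Finset.mem_filter, himg, Finset.mem_union]
      grind
    have := Finset.card_le_card (Finset.insert_subset hpI hN)
    rw [Finset.card_insert_of_notMem hpN] at this
    omega

/-- If `H` is a union of bicliques, then the exceptional pairs and the surplus vertices of `H`
bound the size of some dominating set. -/
theorem Track.exists_dominating {G H : BGraph} {π : ℕ → ℕ} {Z : Finset (ℕ × ℕ)}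
    (h : Track G H π Z) (hG : Bipartite G) (hC4 : C4Free G) (hlink : Linked G)
    (hne : (verts G).Nonempty) (hH : IsBicliqueUnion H) :
    ∃ D : Finset ℕ, (∀ d ∈ D, d ∈ verts G) ∧ Dominates G D (verts_finite G).toFinset ∧
      D.card + (verts G).ncard ≤ 1 + Z.card + (verts H).ncard := by
  classical
  let P : Finset ℕ → Prop := fun W => IsClosed H W ∧ W.Nonempty ∧ ∃ D : Finset ℕ,
    (∀ d ∈ D, d ∈ verts G) ∧ Dominates G D (W.image π) ∧
      D.card + (W.image π).card ≤ 1 + W.card + (inside Z (W.image π)).card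
  have hsub : ∀ W : Finset ℕ, IsClosed H W → W ⊆ (verts_finite H).toFinset :=
    fun W hW y hy => (verts_finite H).mem_toFinset.2 (hW.1 y hy)
  have hP : ∃ W, P W := by
    obtain ⟨v, hv⟩ := hne
    obtain ⟨x, hx, -⟩ := h.surj v hv
    obtain ⟨W', D', X, hW', -, hxW', -, -, -, hDG', hD', hN, hcard⟩ :=
      h.extend hG hC4 hH (W := ∅) (D := ∅) ⟨by simp, by simp⟩ (by simp)
        (by intro s hs; simp at hs) hx (by simp)
    refine ⟨W', hW', ⟨x, hxW'⟩, D', hDG', hD', ?_⟩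
    have := Finset.card_le_card (hN.trans Finset.sdiff_subset)
    simp only [Finset.card_empty, Finset.image_empty, Finset.inter_empty] at hcard this
    omega
  obtain ⟨W, hWP, hmax⟩ := Finset.exists_max_image
    ((verts_finite H).toFinset.powerset.filter P) Finset.card
    (hP.imp fun W hW => Finset.mem_filter.2 ⟨Finset.mem_powerset.2 (hsub W hW.1), hW⟩)
  obtain ⟨hW, hWne, D, hDG, hD, hc⟩ := (Finset.mem_filter.1 hWP).2
  have hcov : ∀ v ∈ verts G, v ∈ W.image π := by
    by_contra! hv
    obtain ⟨W', D', hW', hss, hrest⟩ := h.grow hG hC4 hlink hH hW hDG hD hWne hc hv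
    have := hmax W' (Finset.mem_filter.2 ⟨Finset.mem_powerset.2 (hsub W' hW'), hW',
      hWne.mono hss.subset, D', hrest⟩)
    exact absurd (Finset.card_lt_card hss) (not_lt.2 this)
  refine ⟨D, hDG, fun s hs => hD s (hcov s ((verts_finite G).mem_toFinset.1 hs)), ?_⟩
  have h1 : (verts G).ncard ≤ (W.image π).card := by
    rw [← Set.ncard_coe_finset]
    exact Set.ncard_le_ncard (fun v hv => hcov v hv) (Finset.finite_toSet _)
  have h2 : W.card ≤ (verts H).ncard := by
    rw [Set.ncard_eq_toFinset_card _ (verts_finite H)]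
    exact Finset.card_le_card (hsub W hW)
  have h3 : (inside Z (W.image π)).card ≤ Z.card := Finset.card_filter_le _ _
  omega

theorem adj_mem_verts {G : BGraph} (hG : Bipartite G) {u v : ℕ} (h : G.Adj u v) :
    u ∈ verts G ∧ v ∈ verts G :=
  (hG.2 u v h).elim (fun h => ⟨Or.inl h.1, Or.inr h.2⟩) (fun h => ⟨Or.inr h.1, Or.inl h.2⟩)

theorem adj_ne {G : BGraph} (hG : Bipartite G) {u v : ℕ} (h : G.Adj u v) : u ≠ v := by
  rintro rfl
  rcases hG.2 u u h with h | h
  · exact hG.not_mem_right h.1 h.2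
  · exact hG.not_mem_right h.2 h.1

theorem induce_adj {G : BGraph} (hG : Bipartite G) (u v : verts G) :
    (SimpleGraph.induce (verts G) (SimpleGraph.fromRel G.Adj)).Adj u v ↔ G.Adj u v := by
  rw [SimpleGraph.induce_adj, SimpleGraph.fromRel_adj]
  exact ⟨fun h => h.2.elim id (G.symm _ _), fun h => ⟨adj_ne hG h, Or.inl h⟩⟩

theorem IsTreeB.c4Free {G : BGraph} (hT : IsTreeB G) (hG : Bipartite G) : C4Free G := by
  intro a a' b b' hab ha'b hab' ha'b'
  by_contra! hne
  have hpath : ∀ c : verts G, G.Adj a c → G.Adj a' c →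
      ∃ p : (SimpleGraph.induce (verts G) (SimpleGraph.fromRel G.Adj)).Path
        ⟨a, (adj_mem_verts hG hab).1⟩ ⟨a', (adj_mem_verts hG ha'b).1⟩, p.1.snd = c := by
    intro c hac ha'c
    refine ⟨⟨.cons ((induce_adj hG _ c).2 hac) (.cons ((induce_adj hG c _).2
      (G.symm _ _ ha'c)) .nil), ?_⟩, by simp⟩
    have h1 := adj_ne hG hac
    have h2 := adj_ne hG ha'c
    simp only [SimpleGraph.Walk.cons_isPath_iff, SimpleGraph.Walk.support_cons,
      SimpleGraph.Walk.support_nil, SimpleGraph.Walk.IsPath.nil, List.mem_cons,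
      List.not_mem_nil, Subtype.ext_iff]
    grind
  obtain ⟨p, hp⟩ := hpath ⟨b, (adj_mem_verts hG hab).2⟩ hab ha'b
  obtain ⟨q, hq⟩ := hpath ⟨b', (adj_mem_verts hG hab').2⟩ hab' ha'b'
  rw [(hT.isAcyclic.subsingleton_path _ _).elim p q, hq] at hp
  exact hne.2 (congrArg Subtype.val hp).symm

theorem IsTreeB.linked {G : BGraph} (hT : IsTreeB G) (hG : Bipartite G) : Linked G := by
  rintro S ⟨u, huS, hu⟩ ⟨v, hv, hvS⟩
  obtain ⟨p⟩ := hT.connected.preconnected ⟨u, hu⟩ ⟨v, hv⟩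
  obtain ⟨d, -, h1, h2⟩ := p.exists_boundary_dart (Subtype.val ⁻¹' S) huS hvS
  exact ⟨d.fst, h1, d.snd, h2, (induce_adj hG _ _).1 d.adj⟩

open Classical in
/-- The edges of `G`, oriented from `A` to `B`. -/
noncomputable def edges (G : BGraph) : Finset (ℕ × ℕ) :=
  (G.finA.toFinset ×ˢ G.finB.toFinset).filter fun p => G.Adj p.1 p.2

theorem mem_edges {G : BGraph} {p : ℕ × ℕ} :
    p ∈ edges G ↔ (p.1 ∈ G.A ∧ p.2 ∈ G.B) ∧ G.Adj p.1 p.2 := by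
  simp [edges]

theorem IsTreeB.card_edges_lt {G : BGraph} (hT : IsTreeB G) (hG : Bipartite G) :
    (edges G).card + 1 ≤ (verts G).ncard := by
  classical
  have : Fintype (verts G) := (verts_finite G).fintype
  have hcard := SimpleGraph.IsTree.card_edgeFinset hT
  rw [Set.ncard_eq_toFinset_card', Set.toFinset_card, ← hcard]
  refine Nat.add_le_add_right (Finset.card_le_card_of_injOn
    (fun p => if h : p.1 ∈ verts G ∧ p.2 ∈ verts G then s(⟨p.1, h.1⟩, ⟨p.2, h.2⟩)
      else s(hT.connected.nonempty.some, hT.connected.nonempty.some)) ?_ ?_) 1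
  · rintro ⟨a, b⟩ hp
    have hp' := mem_edges.1 (Finset.mem_coe.1 hp)
    have hv := adj_mem_verts hG hp'.2
    simp only [hv, and_self, dite_true, Finset.mem_coe, SimpleGraph.mem_edgeFinset,
      SimpleGraph.mem_edgeSet]
    exact (induce_adj hG _ _).2 hp'.2
  · rintro ⟨a, b⟩ hp ⟨a', b'⟩ hq heq
    have hp' := mem_edges.1 (Finset.mem_coe.1 hp)
    have hq' := mem_edges.1 (Finset.mem_coe.1 hq)
    have hv := adj_mem_verts hG hp'.2
    have hv' := adj_mem_verts hG hq'.2
    simp only [hv, hv', and_self, dite_true, Sym2.eq_iff, Subtype.mk.injEq] at heq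
    rcases heq with ⟨rfl, rfl⟩ | ⟨rfl, rfl⟩
    · rfl
    · exact absurd hp'.1.2 (hG.not_mem_right hq'.1.1)

/-- A set of edges can be deleted one at a time. -/
theorem exists_delete {G : BGraph} (R : Finset (ℕ × ℕ))
    (hG : Bipartite G) (hR : R ⊆ edges G) :
    ∃ (L : List Op) (G' : BGraph), L.length = R.card ∧ (∀ op ∈ L, ¬ IsSplitOp op) ∧
      (∀ sA sB, ApplySeq sA sB L G G') ∧
      ∀ x y, G'.Adj x y ↔ G.Adj x y ∧ (x, y) ∉ R ∧ (y, x) ∉ R := by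
  classical
  induction R using Finset.induction_on generalizing G with
  | empty => exact ⟨[], G, rfl, by simp, fun _ _ => rfl, by simp⟩
  | @insert p R hp ih =>
    obtain ⟨u, v⟩ := p
    obtain ⟨⟨hu, hv⟩, huv⟩ := mem_edges.1 (hR (Finset.mem_insert_self _ _))
    dsimp only at hu hv huv
    let G₁ : BGraph := ⟨G.A, G.B, G.finA, G.finB,
      fun x y => G.Adj x y ∧ ¬((x = u ∧ y = v) ∨ (x = v ∧ y = u)),
      fun x y h => ⟨G.symm x y h.1, fun h' => h.2 (by tauto)⟩⟩
    have hG₁ : Bipartite G₁ := ⟨hG.1, fun x y h => hG.2 x y h.1⟩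
    have hR₁ : R ⊆ edges G₁ := by
      rintro ⟨x, y⟩ hxy
      obtain ⟨hm, hadj⟩ := mem_edges.1 (hR (Finset.mem_insert_of_mem hxy))
      refine mem_edges.2 ⟨hm, hadj, ?_⟩
      rintro (⟨rfl, rfl⟩ | ⟨rfl, rfl⟩)
      · exact hp hxy
      · exact hG.not_mem_right hu hm.2
    obtain ⟨L, G', hlen, hns, happ, hadj⟩ := ih hG₁ hR₁
    refine ⟨Op.del u v :: L, G', ?_, ?_, fun sA sB => ⟨G₁, ?_, happ sA sB⟩, ?_⟩
    · rw [List.length_cons, hlen, Finset.card_insert_of_notMem hp]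
    · intro op hop
      rcases List.mem_cons.1 hop with rfl | hop
      · exact id
      · exact hns op hop
    · exact OpStep.del huv rfl rfl fun x y => Iff.rfl
    · intro x y
      rw [hadj]
      simp only [G₁, Finset.mem_insert, Prod.mk.injEq]
      tauto

/-- A dominating set `D` of a tree yields a spanning star forest obtained by deleting at most
`|D| - 1` edges. -/
theorem exists_delete_of_dominates {G : BGraph} (hG : Bipartite G) (hT : IsTreeB G)
    {D : Finset ℕ} (hDG : ∀ d ∈ D, d ∈ verts G)
    (hD : Dominates G D (verts_finite G).toFinset) :
    ∃ L : List Op, L.length + 1 ≤ D.card ∧ (∀ op ∈ L, ¬ IsSplitOp op) ∧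
      ∀ sA sB, Solves sA sB L G := by
  classical
  have hdom : ∀ v ∈ (verts_finite G).toFinset \ D, ∃ d ∈ D, G.Adj v d := fun v hv =>
    (hD v (Finset.mem_sdiff.1 hv).1).resolve_left (Finset.mem_sdiff.1 hv).2
  choose! f hfD hf using hdom
  set V := (verts_finite G).toFinset with hV
  let e : ℕ → ℕ × ℕ := fun v => if v ∈ G.A then (v, f v) else (f v, v)
  have he : ∀ v ∈ V \ D, e v ∈ edges G := by
    intro v hv
    have hadj := hf v hv
    rcases hG.2 _ _ hadj with h | h
    · simp only [e, h.1, if_true]; exact mem_edges.2 ⟨h, hadj⟩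
    · have : v ∉ G.A := fun hA => hG.not_mem_right hA h.1
      simp only [e, this, if_false]; exact mem_edges.2 ⟨h.symm, G.symm _ _ hadj⟩
  have hinj : Set.InjOn e (V \ D : Finset ℕ) := by
    intro v hv w hw hvw
    have h1 := hfD v hv
    have h2 := hfD w hw
    have h3 := (Finset.mem_sdiff.1 hv).2
    have h4 := (Finset.mem_sdiff.1 hw).2
    simp only [e] at hvw
    split_ifs at hvw <;> grind
  have hFc : ((V \ D).image e).card = (V \ D).card := Finset.card_image_of_injOn hinj
  have hFsub : (V \ D).image e ⊆ edges G := Finset.image_subset_iff.2 he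
  obtain ⟨L, G', hlen, hns, happ, hadj⟩ :=
    exists_delete (edges G \ (V \ D).image e) hG Finset.sdiff_subset
  have hDV : D ⊆ V := fun d hd => (verts_finite G).mem_toFinset.2 (hDG d hd)
  refine ⟨L, ?_, hns, fun sA sB => ⟨G', happ sA sB, ?_⟩⟩
  · have h1 := hT.card_edges_lt hG
    rw [Set.ncard_eq_toFinset_card _ (verts_finite G), ← hV] at h1
    have h2 := Finset.card_sdiff_add_card_eq_card hFsub
    have h3 := Finset.card_sdiff_add_card_eq_card hDV
    omega
  · have hstar : ∀ x y, G'.Adj x y → (x ∉ D ∧ y ∈ D ∧ y = f x) ∨ (y ∉ D ∧ x ∈ D ∧ x = f y) := by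
      intro x y hxy
      obtain ⟨hxy, h1, h2⟩ := (hadj x y).1 hxy
      have hmem : (x, y) ∈ (V \ D).image e ∨ (y, x) ∈ (V \ D).image e := by
        rcases hG.2 x y hxy with h | h
        · left
          by_contra hn
          exact h1 (Finset.mem_sdiff.2 ⟨mem_edges.2 ⟨h, hxy⟩, hn⟩)
        · right
          by_contra hn
          exact h2 (Finset.mem_sdiff.2 ⟨mem_edges.2 ⟨h.symm, G.symm _ _ hxy⟩, hn⟩)
      simp only [Finset.mem_image] at hmem
      rcases hmem with ⟨v, hv, hev⟩ | ⟨v, hv, hev⟩ <;>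
      · have h5 := hfD v hv
        have h6 := (Finset.mem_sdiff.1 hv).2
        simp only [e] at hev
        split_ifs at hev <;> grind
    intro a b c d hab hbc hcd
    have h1 := hstar a b hab
    have h2 := hstar b c hbc
    have h3 := hstar c d hcd
    have : a = c ∨ b = d := by grind
    rcases this with rfl | rfl
    · exact hcd
    · exact hab

/-- Any solution of a tree can be replaced by one, at most as long, that only deletes edges. -/
theorem exists_delete_solution {G : BGraph} (hG : Bipartite G) (hT : IsTreeB G)
    {sA sB : Bool} {L : List Op} (hL : Solves sA sB L G) :
    ∃ L' : List Op, L'.length ≤ L.length ∧ (∀ op ∈ L', ¬ IsSplitOp op) ∧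
      ∀ sA sB, Solves sA sB L' G := by
  obtain ⟨H, happ, hH⟩ := hL
  obtain ⟨π, Z, hTr, hc⟩ := (Track.refl hG).applySeq happ
  have hne : (verts G).Nonempty := Set.nonempty_coe_sort.1 hT.connected.nonempty
  obtain ⟨D, hDG, hD, hDc⟩ :=
    hTr.exists_dominating hG (hT.c4Free hG) (hT.linked hG) hne hH
  obtain ⟨L', hlen, hns, hsol⟩ := exists_delete_of_dominates hG hT hDG hD
  rw [Finset.card_empty] at hc
  exact ⟨L', by omega, hns, hsol⟩

theorem exists_solution {G : BGraph} (hG : Bipartite G) :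
    ∃ L : List Op, ∀ sA sB, Solves sA sB L G := by
  obtain ⟨L, G', -, -, happ, hadj⟩ := exists_delete (edges G) hG subset_rfl
  refine ⟨L, fun sA sB => ⟨G', happ sA sB, fun a b c d hab => ?_⟩⟩
  obtain ⟨hab, h1, h2⟩ := (hadj a b).1 hab
  rcases hG.2 a b hab with h | h
  · exact absurd (mem_edges.2 ⟨h, hab⟩) h1
  · exact absurd (mem_edges.2 ⟨h.symm, G.symm _ _ hab⟩) h2

/-- For every tree `T = (A, B, E)`, `bceovs(T, A) = bcevs(T)`,
and this common value is achieved by an optimal sequence consisting only of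
edge editions (no vertex splitting). -/
theorem tree_bceovs_eq_bcevs (G : BGraph) (hbip : Bipartite G)
    (htree : IsTreeB G) :
    bceovs G = bcevs G ∧
    ∃ L, L.length = bcevs G ∧ Solves true true L G ∧
      ∀ op ∈ L, ¬ IsSplitOp op := by
  obtain ⟨L₀, hL₀⟩ := exists_solution hbip
  obtain ⟨L₁, hlen₁, hsol₁⟩ : ∃ L : List Op, L.length = bcevs G ∧ Solves true true L G :=
    Nat.sInf_mem (s := {n | ∃ L : List Op, L.length = n ∧ Solves true true L G})
      ⟨_, L₀, rfl, hL₀ _ _⟩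
  obtain ⟨L₂, hlen₂, hsol₂⟩ : ∃ L : List Op, L.length = bceovs G ∧ Solves true false L G :=
    Nat.sInf_mem (s := {n | ∃ L : List Op, L.length = n ∧ Solves true false L G})
      ⟨_, L₀, rfl, hL₀ _ _⟩
  obtain ⟨K₁, hK₁, hns, hsolK₁⟩ := exists_delete_solution hbip htree hsol₁
  obtain ⟨K₂, hK₂, -, hsolK₂⟩ := exists_delete_solution hbip htree hsol₂
  have h1 : bcevs G ≤ K₁.length := Nat.sInf_le ⟨K₁, rfl, hsolK₁ _ _⟩
  have h2 : bceovs G ≤ K₁.length := Nat.sInf_le ⟨K₁, rfl, hsolK₁ _ _⟩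
  have h3 : bcevs G ≤ K₂.length := Nat.sInf_le ⟨K₂, rfl, hsolK₂ _ _⟩
  exact ⟨by omega, K₁, by omega, hsolK₁ _ _, hns⟩

end BCE
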